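/- Let x > 0 and let s ∈ ℂ with Re(s) > 1/2. Then ∑_{n=1}^∞ (−1)^n/(x² + n²)^s = −x^{−2s}/2 + (2^{3/2−s}·π^s·x^{1/2−s}/Γ(s))·∑_{n=1}^∞ (2n−1)^{s−1/2}·K_{s−1/2}(π(2n−1)x). -/

import Mathlib

/-!
The alternating sum is the Mellin transform of a theta series: `Γ(s) (x² + n²)^(-s)` equals
`∫₀^∞ t^(s-1) exp(-(x² + n²) t) dt`, and Jacobi's transformation (`theta_alternating`) turns
`∑ (-1)^n exp(-n² t)` into `√(π/t) ∑ exp(-π² (n + 1/2)² / t)`. Integrating both sides term by term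
(`sum_kernelInt`) yields `√π / Γ(s)` times the sum of the integrals
`∫₀^∞ u^(s-3/2) exp(-x² u - B² / (4u)) du` with `B = π (2n - 1)`.

It remains to recognise these integrals as Bessel functions in the representation
`∫₁^∞ exp(-z t) (t² - 1)^(s-1) dt` with `z = B x` (`integral_Ioi_one_eq_kernelInt`). With
`t = √(1 + w)`, the factor `exp(-B x t) / t` is, by the Lévy integral (`integral_levy`), a
superposition over `u` of the functions `exp(-B² (1 + w) / (4u))`. After Fubini the integral over `w`
is a Gamma integral. The Lévy integral itself follows from the Cauchy–Schlömilch substitution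
(`cauchySchlomilch`). The powers of `2`, `π`, `x` and `2n - 1` are collected in `cpow_mul_besselK`.
-/

/-- The modified Bessel function of the second kind `K_ν(z)` for real `z > 0` and
complex order `ν` with `Re ν > -1/2`, defined by its standard integral representation. -/
noncomputable def besselK (ν : ℂ) (z : ℝ) : ℂ :=
  (Real.sqrt Real.pi : ℂ) * ((z / 2 : ℝ) : ℂ) ^ ν / Complex.Gamma (ν + 1 / 2) *
    ∫ t in Set.Ioi (1 : ℝ), Complex.exp (-(z * t)) * ((t ^ 2 - 1 : ℝ) : ℂ) ^ (ν - 1 / 2)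

open Set MeasureTheory

/-! ### The Lévy integral -/

/-- The Cauchy–Schlömilch substitution `y = c w - x / w`, a bijection from `(0, ∞)` to `ℝ`, combined
with the symmetry `w ↦ x / (c w)`, reduces the integral to the Gaussian one. -/
lemma cauchySchlomilch {x c : ℝ} (hx : 0 < x) (hc : 0 < c) :
    ∫ w in Ioi (0 : ℝ), Real.exp (-(c * w - x / w) ^ 2) = √Real.pi / (2 * c) := by
  set E : ℝ → ℝ := fun w => Real.exp (-(c * w - x / w) ^ 2) with hE
  have hEm : Measurable E := by rw [hE]; fun_prop
  have hder : ∀ w ∈ Ioi (0 : ℝ),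
      HasDerivWithinAt (fun w => c * w - x / w) (c + x / w ^ 2) (Ioi 0) w := by
    intro w hw
    have hw0 : w ≠ 0 := ne_of_gt hw
    have h := ((hasDerivAt_id w).const_mul c).sub ((hasDerivAt_inv hw0).const_mul x)
    refine (h.congr_deriv ?_).hasDerivWithinAt
    field_simp
    ring
  have hinj : InjOn (fun w => c * w - x / w) (Ioi 0) := by
    intro a ha b hb hab
    have ha : 0 < a := ha
    have hb : 0 < b := hb
    simp only at hab
    field_simp at hab
    have h : (a - b) * (c * a * b + x) = 0 := by linear_combination hab
    rcases mul_eq_zero.1 h with h | h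
    · linarith
    · have : 0 < c * a * b + x := by positivity
      linarith
  have himg : (fun w => c * w - x / w) '' Ioi 0 = univ := by
    refine eq_univ_of_forall fun y => ?_
    have hD : 0 < y ^ 2 + 4 * c * x := by positivity
    have h1 : |y| < √(y ^ 2 + 4 * c * x) := by
      rw [← Real.sqrt_sq_eq_abs]
      exact Real.sqrt_lt_sqrt (sq_nonneg y) (by nlinarith [mul_pos hc hx])
    have h2 : 0 < y + √(y ^ 2 + 4 * c * x) := by linarith [neg_abs_le y]
    refine ⟨(y + √(y ^ 2 + 4 * c * x)) / (2 * c), by simp only [mem_Ioi]; positivity, ?_⟩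
    have h3 := Real.sq_sqrt hD.le
    simp only
    set r := √(y ^ 2 + 4 * c * x)
    field_simp
    linear_combination h3
  have hpos : ∀ w ∈ Ioi (0 : ℝ), 0 < c + x / w ^ 2 := fun w hw => by
    have : 0 < w := hw
    positivity
  have hI : IntegrableOn (fun w => (c + x / w ^ 2) * E w) (Ioi 0) := by
    have h := (integrableOn_image_iff_integrableOn_abs_deriv_smul measurableSet_Ioi hder hinj
      (fun y => Real.exp (-1 * y ^ 2))).1 (by
        rw [himg]; exact (integrable_exp_neg_mul_sq one_pos).integrableOn)
    refine h.congr_fun (fun w hw => ?_) measurableSet_Ioi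
    simp only [abs_of_pos (hpos w hw), smul_eq_mul, hE, neg_one_mul]
  have h1 : ∫ w in Ioi (0 : ℝ), (c + x / w ^ 2) * E w = √Real.pi := by
    have h := integral_image_eq_integral_abs_deriv_smul measurableSet_Ioi hder hinj
      (fun y => Real.exp (-1 * y ^ 2))
    rw [himg, setIntegral_univ, integral_gaussian, div_one] at h
    rw [h]
    refine setIntegral_congr_fun measurableSet_Ioi (fun w hw => ?_)
    simp only [abs_of_pos (hpos w hw), smul_eq_mul, hE, neg_one_mul]
  have hIE : IntegrableOn (fun w => c * E w) (Ioi 0) := by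
    refine Integrable.mono' hI (hEm.const_mul c).aestronglyMeasurable ?_
    filter_upwards [ae_restrict_mem measurableSet_Ioi] with w hw
    have : 0 < w := hw
    have hEp : 0 < E w := Real.exp_pos _
    rw [Real.norm_of_nonneg (by positivity)]
    have : 0 < x / w ^ 2 * E w := by positivity
    nlinarith
  -- The involution `w ↦ x / (c w)` negates `c w - x / w`
  have h3 : ∫ w in Ioi (0 : ℝ), x / w ^ 2 * E w = ∫ w in Ioi (0 : ℝ), c * E w := by
    have himg' : (fun w => x / c * w⁻¹) '' Ioi (0 : ℝ) = Ioi 0 := by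
      ext y
      constructor
      · rintro ⟨w, hw, rfl⟩
        have : 0 < w := hw
        simp only [mem_Ioi]; positivity
      · intro hy
        have : 0 < y := hy
        refine ⟨x / c * y⁻¹, by simp only [mem_Ioi]; positivity, ?_⟩
        simp only
        field_simp
    have h := integral_image_eq_integral_abs_deriv_smul (measurableSet_Ioi (a := (0 : ℝ)))
      (f := fun w => x / c * w⁻¹) (f' := fun w => x / c * (-(w ^ 2)⁻¹))
      (fun w hw => ((hasDerivAt_inv (ne_of_gt hw)).const_mul _).hasDerivWithinAt)
      (fun a ha b hb hab => by
        have : x / c ≠ 0 := by positivity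
        simpa [this] using hab) (fun w => c * E w)
    rw [himg'] at h
    rw [h]
    refine setIntegral_congr_fun measurableSet_Ioi (fun w hw => ?_)
    have hw : 0 < w := hw
    have h5 : |x / c * (-(w ^ 2)⁻¹)| = x / c * (w ^ 2)⁻¹ := by
      rw [mul_neg, abs_neg, abs_of_pos (by positivity)]
    have h6 : E (x / c * w⁻¹) = E w := by
      simp only [hE]
      congr 1
      field_simp
      ring
    simp only [h5, h6, smul_eq_mul]
    field_simp
  have h4 : ∫ w in Ioi (0 : ℝ), x / w ^ 2 * E w = √Real.pi - ∫ w in Ioi (0 : ℝ), c * E w := by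
    rw [← h1, ← integral_sub hI hIE]
    refine setIntegral_congr_fun measurableSet_Ioi (fun w hw => ?_)
    ring
  rw [h3, integral_const_mul] at h4
  field_simp
  linarith

/-- Normalisation of the Lévy density with exponential tilt; it expresses `exp(-2 c x)` as a
superposition of Gaussians in `c`. -/
lemma integral_levy {x c : ℝ} (hx : 0 < x) (hc : 0 < c) :
    ∫ u in Ioi (0 : ℝ), u ^ (-(3 / 2) : ℝ) * Real.exp (-(x ^ 2 * u) - c ^ 2 / u) =
      √Real.pi / c * Real.exp (-(2 * c * x)) := by
  rw [← integral_comp_rpow_Ioi _ (show (-2 : ℝ) ≠ 0 by norm_num)]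
  have : ∀ w ∈ Ioi (0 : ℝ), (|(-2 : ℝ)| * w ^ ((-2 : ℝ) - 1)) • ((w ^ (-2 : ℝ)) ^ (-(3 / 2) : ℝ) *
      Real.exp (-(x ^ 2 * w ^ (-2 : ℝ)) - c ^ 2 / w ^ (-2 : ℝ))) =
      2 * Real.exp (-(2 * c * x)) * Real.exp (-(c * w - x / w) ^ 2) := by
    intro w hw
    have hw : 0 < w := hw
    have h1 : w ^ (-2 : ℝ) = (w ^ 2)⁻¹ := by
      rw [Real.rpow_neg hw.le]; norm_cast
    rw [smul_eq_mul, ← mul_assoc, mul_assoc |(-2 : ℝ)|, ← Real.rpow_mul hw.le,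
      ← Real.rpow_add hw, h1, mul_assoc 2 (Real.exp _), ← Real.exp_add]
    have h2 : (-2 - 1 + -2 * -(3 / 2) : ℝ) = 0 := by norm_num
    rw [h2, Real.rpow_zero]
    norm_num
    field_simp
    ring
  rw [setIntegral_congr_fun measurableSet_Ioi this, integral_const_mul, cauchySchlomilch hx hc]
  field_simp

/-! ### Two integral representations of the Bessel function -/

/-- The integral `∫₀^∞ u^(s - 3/2) exp(-x² u - B² / (4u)) du`, which is a multiple of
`K_{s - 1/2}(B x)`; see `integral_Ioi_one_eq_kernelInt`. -/
noncomputable def kernelInt (s : ℂ) (x B : ℝ) : ℂ :=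
  ∫ u in Ioi (0 : ℝ), (u : ℂ) ^ (s - 3 / 2) * (Real.exp (-(x ^ 2 * u) - B ^ 2 / 4 / u) : ℂ)

lemma exp_neg_le_inv {a : ℝ} (ha : 0 < a) : Real.exp (-a) ≤ 1 / a := by
  rw [Real.exp_neg, one_div]
  exact inv_anti₀ ha (by linarith [Real.add_one_le_exp a])

lemma integrableOn_gamma {x σ : ℝ} (hx : 0 < x) (hσ : 0 < σ) :
    IntegrableOn (fun u : ℝ => u ^ (σ - 1) * Real.exp (-(x * u))) (Ioi 0) := by
  have h := integrableOn_rpow_mul_exp_neg_mul_rpow (p := 1) (s := σ - 1) (b := x)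
    (by linarith) one_pos hx
  simpa using h

/-- Domination of the kernel by a Gamma integrand, gaining the factor `A⁻¹` that makes the Bessel
series summable. -/
lemma kernel_le {x σ A u : ℝ} (hA : 0 < A) (hu : 0 < u) :
    u ^ (σ - 3 / 2) * Real.exp (-(x ^ 2 * u) - A / u) ≤
      A⁻¹ * (u ^ ((σ + 1 / 2) - 1) * Real.exp (-(x ^ 2 * u))) := by
  have h := exp_neg_le_inv (div_pos hA hu)
  have h2 : u ^ ((σ + 1 / 2) - 1) = u ^ (σ - 3 / 2) * u := by
    rw [← Real.rpow_add_one hu.ne']; congr 1; ring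
  rw [sub_eq_add_neg (-(x ^ 2 * u)), Real.exp_add, h2]
  calc _ ≤ u ^ (σ - 3 / 2) * (Real.exp (-(x ^ 2 * u)) * (1 / (A / u))) := by gcongr
    _ = _ := by field_simp

lemma integrableOn_kernel {x σ A : ℝ} (hx : 0 < x) (hσ : 1 / 2 < σ) (hA : 0 < A) :
    IntegrableOn (fun u : ℝ => u ^ (σ - 3 / 2) * Real.exp (-(x ^ 2 * u) - A / u)) (Ioi 0) := by
  refine Integrable.mono' ((integrableOn_gamma (pow_pos hx 2)
    (show 0 < σ + 1 / 2 by linarith)).const_mul A⁻¹) ?_ ?_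
  · exact Measurable.aestronglyMeasurable (by fun_prop)
  · filter_upwards [ae_restrict_mem measurableSet_Ioi] with u hu
    have hu : 0 < u := hu
    rw [Real.norm_of_nonneg (by positivity)]
    exact kernel_le hA hu

lemma integral_kernel_le {x σ A : ℝ} (hx : 0 < x) (hσ : 1 / 2 < σ) (hA : 0 < A) :
    ∫ u in Ioi (0 : ℝ), u ^ (σ - 3 / 2) * Real.exp (-(x ^ 2 * u) - A / u) ≤
      A⁻¹ * ∫ u in Ioi (0 : ℝ), u ^ ((σ + 1 / 2) - 1) * Real.exp (-(x ^ 2 * u)) := by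
  rw [← integral_const_mul]
  exact setIntegral_mono_on (integrableOn_kernel hx hσ hA)
    ((integrableOn_gamma (pow_pos hx 2) (show 0 < σ + 1 / 2 by linarith)).const_mul A⁻¹)
    measurableSet_Ioi fun u hu => kernel_le hA hu

lemma norm_kernel {s : ℂ} {x A u : ℝ} (hu : 0 < u) :
    ‖(u : ℂ) ^ (s - 3 / 2) * (Real.exp (-(x ^ 2 * u) - A / u) : ℂ)‖ =
      u ^ (s.re - 3 / 2) * Real.exp (-(x ^ 2 * u) - A / u) := by
  rw [norm_mul, Complex.norm_cpow_eq_rpow_re_of_pos hu, Complex.norm_real,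
    Real.norm_of_nonneg (Real.exp_pos _).le]
  norm_num

/-- The substitution `t = √(1 + w)`. -/
lemma integral_Ioi_one_eq (s : ℂ) (z : ℝ) :
    ∫ t in Ioi (1 : ℝ), Complex.exp (-(z * t)) * ((t ^ 2 - 1 : ℝ) : ℂ) ^ (s - 1) =
      ∫ w in Ioi (0 : ℝ), (w : ℂ) ^ (s - 1) *
        ((1 / (2 * √(1 + w)) * Real.exp (-(z * √(1 + w))) : ℝ) : ℂ) := by
  have himg : (fun w : ℝ => √(1 + w)) '' Ioi 0 = Ioi 1 := by
    ext y
    constructor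
    · rintro ⟨w, hw, rfl⟩
      have : 0 < w := hw
      simp only [mem_Ioi]
      rw [Real.lt_sqrt one_pos.le]; linarith
    · intro hy
      have hy : 1 < y := hy
      refine ⟨y ^ 2 - 1, by simp only [mem_Ioi]; nlinarith, ?_⟩
      simp only [add_sub_cancel]
      exact Real.sqrt_sq (by linarith)
  rw [← himg, integral_image_eq_integral_abs_deriv_smul (measurableSet_Ioi (a := (0 : ℝ)))
    (f' := fun w => 1 / (2 * √(1 + w)))]
  · refine setIntegral_congr_fun measurableSet_Ioi (fun w hw => ?_)
    have hw : 0 < w := hw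
    have h1 : √(1 + w) ^ 2 - 1 = w := by rw [Real.sq_sqrt (by linarith)]; ring
    have h2 : |1 / (2 * √(1 + w))| = 1 / (2 * √(1 + w)) := abs_of_pos (by positivity)
    simp only [h1, h2, Complex.real_smul]
    push_cast
    ring
  · intro w hw
    have hw : 0 < w := hw
    have h := ((hasDerivAt_id w).const_add 1).sqrt (by simp only [id]; linarith)
    exact h.hasDerivWithinAt
  · intro a ha b hb hab
    have ha : 0 < a := ha
    have hb : 0 < b := hb
    have := (Real.sqrt_inj (by linarith) (by linarith)).1 hab
    linarith

/-- Absolute convergence for the Fubini step in `integral_Ioi_one_eq_kernelInt`; the integral over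
`w` is taken first. -/
lemma integrable_double {s : ℂ} {x B : ℝ} (hs : 1 / 2 < s.re) (hx : 0 < x) (hB : 0 < B) :
    Integrable (Function.uncurry fun w u : ℝ => (w : ℂ) ^ (s - 1) *
        ((u ^ (-(3 / 2) : ℝ) * Real.exp (-(x ^ 2 * u) - B ^ 2 / 4 * (1 + w) / u) : ℝ) : ℂ))
      ((volume.restrict (Ioi 0)).prod (volume.restrict (Ioi 0))) := by
  have hm : Measurable (Function.uncurry fun w u : ℝ => (w : ℂ) ^ (s - 1) *
        ((u ^ (-(3 / 2) : ℝ) * Real.exp (-(x ^ 2 * u) - B ^ 2 / 4 * (1 + w) / u) : ℝ) : ℂ)) := by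
    unfold Function.uncurry
    fun_prop
  have key : ∀ u : ℝ, 0 < u → ∀ w : ℝ, 0 < w → ‖(w : ℂ) ^ (s - 1) *
        ((u ^ (-(3 / 2) : ℝ) * Real.exp (-(x ^ 2 * u) - B ^ 2 / 4 * (1 + w) / u) : ℝ) : ℂ)‖ =
      (u ^ (-(3 / 2) : ℝ) * Real.exp (-(x ^ 2 * u) - B ^ 2 / 4 / u)) *
        (w ^ (s.re - 1) * Real.exp (-(B ^ 2 / 4 / u * w))) := by
    intro u hu w hw
    rw [norm_mul, Complex.norm_cpow_eq_rpow_re_of_pos hw, Complex.norm_real,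
      Real.norm_of_nonneg (by positivity)]
    have : -(x ^ 2 * u) - B ^ 2 / 4 * (1 + w) / u =
      (-(x ^ 2 * u) - B ^ 2 / 4 / u) + (-(B ^ 2 / 4 / u * w)) := by ring
    rw [this, Real.exp_add]
    simp only [Complex.sub_re, Complex.one_re]
    ring
  rw [integrable_prod_iff' hm.aestronglyMeasurable]
  refine ⟨?_, ?_⟩
  · filter_upwards [ae_restrict_mem measurableSet_Ioi] with u hu
    have hu : 0 < u := hu
    refine Integrable.mono' ((integrableOn_gamma (show 0 < B ^ 2 / 4 / u by positivity)
      (show 0 < s.re by linarith)).const_mul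
        (u ^ (-(3 / 2) : ℝ) * Real.exp (-(x ^ 2 * u) - B ^ 2 / 4 / u))) ?_ ?_
    · exact (hm.comp measurable_prodMk_right).aestronglyMeasurable
    · filter_upwards [ae_restrict_mem measurableSet_Ioi] with w hw
      exact (key u hu w hw).le
  · have h := (integrableOn_kernel hx hs (show 0 < B ^ 2 / 4 by positivity)).const_mul
      ((4 / B ^ 2) ^ s.re * Real.Gamma s.re)
    refine IntegrableOn.congr_fun h (fun u hu => ?_) measurableSet_Ioi
    have hu : 0 < u := hu
    simp only [Function.uncurry]
    rw [setIntegral_congr_fun measurableSet_Ioi (key u hu), integral_const_mul,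
      Real.integral_rpow_mul_exp_neg_mul_Ioi (by linarith) (by positivity)]
    have h1 : 1 / (B ^ 2 / 4 / u) = 4 / B ^ 2 * u := by field_simp
    rw [h1, Real.mul_rpow (by positivity) hu.le, sub_eq_add_neg s.re, Real.rpow_add hu]
    ring

/-- The integral defining `K_{s - 1/2}(B x)` in terms of `kernelInt`: insert the subordination
formula `integral_levy` for `exp(-B x √(1 + w))`, swap the integrals, and evaluate the integral over
`w` as a Gamma integral. -/
lemma integral_Ioi_one_eq_kernelInt {s : ℂ} {x B : ℝ} (hs : 1 / 2 < s.re) (hx : 0 < x)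
    (hB : 0 < B) :
    ∫ t in Ioi (1 : ℝ), Complex.exp (-((B * x : ℝ) * t)) * ((t ^ 2 - 1 : ℝ) : ℂ) ^ (s - 1) =
      ((B / (4 * √Real.pi) : ℝ) : ℂ) * ((4 / B ^ 2 : ℝ) : ℂ) ^ s * Complex.Gamma s *
        kernelInt s x B := by
  have hpi : 0 < √Real.pi := Real.sqrt_pos.2 Real.pi_pos
  rw [integral_Ioi_one_eq]
  have h1 : ∀ w ∈ Ioi (0 : ℝ), (w : ℂ) ^ (s - 1) *
        ((1 / (2 * √(1 + w)) * Real.exp (-(B * x * √(1 + w))) : ℝ) : ℂ) =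
      ((B / (4 * √Real.pi) : ℝ) : ℂ) * ∫ u in Ioi (0 : ℝ), (w : ℂ) ^ (s - 1) *
        ((u ^ (-(3 / 2) : ℝ) * Real.exp (-(x ^ 2 * u) - B ^ 2 / 4 * (1 + w) / u) : ℝ) : ℂ) := by
    intro w hw
    have hw : 0 < w := hw
    have hr : 0 < √(1 + w) := Real.sqrt_pos.2 (by linarith)
    have h := integral_levy hx (show 0 < B / 2 * √(1 + w) by positivity)
    have h2 : (B / 2 * √(1 + w)) ^ 2 = B ^ 2 / 4 * (1 + w) := by
      rw [mul_pow, Real.sq_sqrt (by linarith)]; ring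
    rw [h2] at h
    rw [integral_const_mul, integral_complex_ofReal, h, mul_left_comm, ← Complex.ofReal_mul]
    congr 2
    rw [show 2 * (B / 2 * √(1 + w)) * x = B * x * √(1 + w) by ring]
    field_simp
    norm_num
  rw [setIntegral_congr_fun measurableSet_Ioi h1, integral_const_mul,
    integral_integral_swap (integrable_double hs hx hB), kernelInt, mul_assoc, mul_assoc]
  congr 1
  rw [← mul_assoc, ← integral_const_mul]
  refine setIntegral_congr_fun measurableSet_Ioi (fun u hu => ?_)
  have hu : 0 < u := hu
  have hA : 0 < B ^ 2 / 4 / u := by positivity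
  have h3 : ∀ w : ℝ, (w : ℂ) ^ (s - 1) *
      ((u ^ (-(3 / 2) : ℝ) * Real.exp (-(x ^ 2 * u) - B ^ 2 / 4 * (1 + w) / u) : ℝ) : ℂ) =
      ((u ^ (-(3 / 2) : ℝ) * Real.exp (-(x ^ 2 * u) - B ^ 2 / 4 / u) : ℝ) : ℂ) *
        ((w : ℂ) ^ (s - 1) * Complex.exp (-((B ^ 2 / 4 / u : ℝ) * w))) := by
    intro w
    have : -(x ^ 2 * u) - B ^ 2 / 4 * (1 + w) / u =
      (-(x ^ 2 * u) - B ^ 2 / 4 / u) + (-(B ^ 2 / 4 / u * w)) := by ring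
    rw [this, Real.exp_add]
    push_cast
    ring
  simp only [h3]
  rw [integral_const_mul, Complex.integral_cpow_mul_exp_neg_mul_Ioi (by linarith) hA]
  have h4 : (1 / (B ^ 2 / 4 / u : ℝ) : ℂ) = ((4 / B ^ 2 : ℝ) : ℂ) * (u : ℂ) := by
    rw [← Complex.ofReal_mul, ← Complex.ofReal_one, ← Complex.ofReal_div]
    congr 1
    field_simp
  rw [h4, Complex.mul_cpow_ofReal_nonneg (by positivity) hu.le, Complex.ofReal_mul,
    Complex.ofReal_cpow hu.le, sub_eq_add_neg s,
    Complex.cpow_add _ _ (Complex.ofReal_ne_zero.2 hu.ne')]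
  push_cast
  ring

/-! ### The theta series and its Mellin transform -/

/-- The sign `(-1)^n`, with weight `1/2` at `n = 0`, so that a sum over `ℕ` with these coefficients
is half of the corresponding alternating sum of an even function over `ℤ`. -/
noncomputable def altCoeff (n : ℕ) : ℂ := if n = 0 then 1 / 2 else (-1) ^ n

lemma norm_altCoeff_le (n : ℕ) : ‖altCoeff n‖ ≤ 1 := by
  unfold altCoeff
  split_ifs <;> norm_num

lemma altCoeff_succ (n : ℕ) : altCoeff (n + 1) = (-1) ^ (n + 1) := by
  simp [altCoeff]

lemma summable_inv_add_sq {a b : ℝ} (ha : 0 < a) (hb : 0 < b) :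
    Summable fun n : ℕ => ((a * (n + b) ^ 2)⁻¹ : ℝ) := by
  have h := (Real.summable_one_div_nat_add_rpow b 2).2 one_lt_two
  refine (h.mul_left a⁻¹).congr fun n => ?_
  rw [abs_of_pos (by positivity), Real.rpow_two]
  field_simp

lemma summable_exp_neg_sq {a b : ℝ} (ha : 0 < a) (hb : 0 < b) :
    Summable fun n : ℕ => (Real.exp (-(a * (n + b) ^ 2)) : ℂ) := by
  rw [Complex.summable_ofReal]
  refine Summable.of_nonneg_of_le (fun n => (Real.exp_pos _).le) (fun n => ?_)
    (summable_inv_add_sq ha hb)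
  rw [← one_div]
  exact exp_neg_le_inv (by positivity)

/-- Jacobi's transformation of the alternating theta series, folded from `ℤ` to `ℕ` on both sides:
`n ↦ -n` on the left and `n ↦ -(n + 1)` on the half-integers on the right. -/
lemma theta_alternating {t : ℝ} (ht : 0 < t) :
    ∑' n : ℕ, altCoeff n * (Real.exp (-(n ^ 2 * t)) : ℂ) =
      (√Real.pi : ℂ) * (t : ℂ) ^ (-(1 / 2) : ℂ) *
        ∑' n : ℕ, (Real.exp (-((Real.pi * (2 * (n + 1) - 1)) ^ 2 / 4 / t)) : ℂ) := by
  have hpi := Real.pi_pos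
  have hpi' : (Real.pi : ℂ) ≠ 0 := Complex.ofReal_ne_zero.2 hpi.ne'
  have ht' : (t : ℂ) ≠ 0 := Complex.ofReal_ne_zero.2 ht.ne'
  have h := Complex.tsum_exp_neg_quadratic (a := ((t / Real.pi : ℝ) : ℂ))
    (by rw [Complex.ofReal_re]; positivity) (-Complex.I / 2)
  have hsgn : ∀ n : ℕ, Complex.exp (-(n * (Real.pi * Complex.I))) = (-1) ^ n := by
    intro n
    rw [← mul_neg, Complex.exp_nat_mul, Complex.exp_neg, Complex.exp_pi_mul_I]
    norm_num
  have hsgn' : ∀ n : ℕ, Complex.exp (n * (Real.pi * Complex.I)) = (-1) ^ n := by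
    intro n
    rw [Complex.exp_nat_mul, Complex.exp_pi_mul_I]
  have hpos : ∀ n : ℕ, Complex.exp (-Real.pi * ((t / Real.pi : ℝ) : ℂ) * ((n : ℤ) : ℂ) ^ 2 +
      2 * Real.pi * (-Complex.I / 2) * ((n : ℤ) : ℂ)) =
      (-1) ^ n * (Real.exp (-(n ^ 2 * t)) : ℂ) := by
    intro n
    rw [← hsgn, Complex.ofReal_exp, ← Complex.exp_add]
    congr 1
    push_cast
    field_simp
    ring
  have hneg : ∀ n : ℕ, Complex.exp (-Real.pi * ((t / Real.pi : ℝ) : ℂ) *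
      ((-((n : ℤ) + 1) : ℤ) : ℂ) ^ 2 +
      2 * Real.pi * (-Complex.I / 2) * ((-((n : ℤ) + 1) : ℤ) : ℂ)) =
      (-1) ^ (n + 1) * (Real.exp (-(((n + 1 : ℕ) : ℝ) ^ 2 * t)) : ℂ) := by
    intro n
    rw [← hsgn', Complex.ofReal_exp, ← Complex.exp_add]
    congr 1
    push_cast
    field_simp
    ring
  have hR : ∀ n : ℕ, Complex.exp (-Real.pi / ((t / Real.pi : ℝ) : ℂ) *
      (((n : ℤ) : ℂ) + Complex.I * (-Complex.I / 2)) ^ 2) =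
      (Real.exp (-((Real.pi * (2 * (n + 1) - 1)) ^ 2 / 4 / t)) : ℂ) := by
    intro n
    rw [Complex.ofReal_exp]
    congr 1
    have : Complex.I * (-Complex.I / 2) = 1 / 2 := by
      rw [mul_div_assoc', mul_neg, Complex.I_mul_I, neg_neg]
    rw [this]
    push_cast
    field_simp
    ring
  have hR' : ∀ n : ℕ, Complex.exp (-Real.pi / ((t / Real.pi : ℝ) : ℂ) *
      (((-((n : ℤ) + 1) : ℤ) : ℂ) + Complex.I * (-Complex.I / 2)) ^ 2) =
      (Real.exp (-((Real.pi * (2 * (n + 1) - 1)) ^ 2 / 4 / t)) : ℂ) := by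
    intro n
    rw [← hR]
    congr 2
    have : Complex.I * (-Complex.I / 2) = 1 / 2 := by
      rw [mul_div_assoc', mul_neg, Complex.I_mul_I, neg_neg]
    rw [this]
    push_cast
    ring
  have hs1 : Summable fun n : ℕ =>
      ((-1) ^ (n + 1) * (Real.exp (-(((n + 1 : ℕ) : ℝ) ^ 2 * t)) : ℂ) : ℂ) := by
    refine Summable.of_norm ?_
    refine (summable_exp_neg_sq ht one_pos).norm.congr fun n => ?_
    rw [norm_mul, norm_pow, norm_neg, norm_one, one_pow, one_mul]
    push_cast
    rw [mul_comm]
  have hs0 : Summable fun n : ℕ => ((-1) ^ n * (Real.exp (-((n : ℝ) ^ 2 * t)) : ℂ) : ℂ) :=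
    (summable_nat_add_iff 1).1 hs1
  have hs2 : Summable fun n : ℕ =>
      (Real.exp (-((Real.pi * (2 * (n + 1) - 1)) ^ 2 / 4 / t)) : ℂ) := by
    refine (summable_exp_neg_sq (show 0 < Real.pi ^ 2 / t by positivity)
      (show (0 : ℝ) < 1 / 2 by norm_num)).congr fun n => ?_
    congr 3
    field_simp
    ring
  rw [tsum_of_nat_of_neg_add_one (by simpa only [hpos] using hs0)
    (by simpa only [hneg] using hs1),
    tsum_of_nat_of_neg_add_one (by simpa only [hR] using hs2)
    (by simpa only [hR'] using hs2)] at h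
  simp only [hpos, hneg, hR, hR'] at h
  rw [hs0.tsum_eq_zero_add] at h
  have hs3 : Summable fun n : ℕ => altCoeff n * (Real.exp (-((n : ℝ) ^ 2 * t)) : ℂ) := by
    refine (summable_nat_add_iff 1).1 (hs1.congr fun n => ?_)
    rw [altCoeff_succ]
  rw [hs3.tsum_eq_zero_add]
  simp only [altCoeff_succ]
  have hc : 1 / ((t / Real.pi : ℝ) : ℂ) ^ (1 / 2 : ℂ) =
      (√Real.pi : ℂ) * (t : ℂ) ^ (-(1 / 2) : ℂ) := by
    have e1 : (1 / 2 : ℂ) = ((1 / 2 : ℝ) : ℂ) := by push_cast; rfl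
    rw [e1, ← Complex.ofReal_neg, ← Complex.ofReal_cpow (by positivity),
      ← Complex.ofReal_cpow ht.le, ← Complex.ofReal_one, ← Complex.ofReal_div,
      ← Complex.ofReal_mul, Real.div_rpow ht.le hpi.le, Real.rpow_neg ht.le, Real.sqrt_eq_rpow]
    congr 1
    have := Real.rpow_pos_of_pos ht (1 / 2)
    field_simp
  rw [hc] at h
  have h0 : altCoeff 0 = 1 / 2 := by simp [altCoeff]
  rw [h0]
  simp only [Nat.cast_zero, pow_zero] at h ⊢
  norm_num at h ⊢
  linear_combination h / 2

lemma summable_rpow_neg {x σ : ℝ} (hx : 0 < x) (hσ : 1 / 2 < σ) :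
    Summable fun n : ℕ => (1 / (x ^ 2 + (n : ℝ) ^ 2)) ^ σ := by
  have h := Real.summable_nat_rpow_inv.2 (show 1 < 2 * σ by linarith)
  refine (summable_nat_add_iff 1).1 ?_
  refine Summable.of_nonneg_of_le (fun n => by positivity) (fun n => ?_)
    ((summable_nat_add_iff 1).2 h)
  rw [Real.rpow_mul (by positivity), Real.rpow_two, ← Real.inv_rpow (by positivity), ← one_div]
  gcongr
  nlinarith [sq_nonneg x]

/-- The Mellin transform of `theta_alternating` against `t^(s - 1) exp(-x² t)`, integrated term by
term. -/
lemma sum_kernelInt {s : ℂ} {x : ℝ} (hs : 1 / 2 < s.re) (hx : 0 < x) :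
    (x : ℂ) ^ (-(2 * s)) / 2 +
      ∑' n : ℕ, (-1 : ℂ) ^ (n + 1) / ((x ^ 2 + (n + 1 : ℝ) ^ 2 : ℝ) : ℂ) ^ s =
    (√Real.pi : ℂ) / Complex.Gamma s *
      ∑' n : ℕ, kernelInt s x (Real.pi * (2 * (n + 1) - 1)) := by
  have hs0 : 0 < s.re := by linarith
  have hΓ : Complex.Gamma s ≠ 0 := Complex.Gamma_ne_zero_of_re_pos hs0
  have hF0 : ∀ n : ℕ, 0 < x ^ 2 + (n : ℝ) ^ 2 := fun n => by positivity
  set F : ℕ → ℝ → ℂ := fun n t => altCoeff n *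
    ((t : ℂ) ^ (s - 1) * Complex.exp (-((x ^ 2 + (n : ℝ) ^ 2 : ℝ) * t))) with hF
  set G : ℕ → ℝ → ℂ := fun n u => (u : ℂ) ^ (s - 3 / 2) *
    (Real.exp (-(x ^ 2 * u) - (Real.pi * (2 * (n + 1) - 1)) ^ 2 / 4 / u) : ℂ) with hG
  have hFn : ∀ n : ℕ, ∀ t ∈ Ioi (0 : ℝ),
      ‖F n t‖ ≤ t ^ (s.re - 1) * Real.exp (-((x ^ 2 + (n : ℝ) ^ 2) * t)) := by
    intro n t ht
    simp only [hF]
    rw [norm_mul, norm_mul, Complex.norm_cpow_eq_rpow_re_of_pos ht, ← Complex.ofReal_mul,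
      ← Complex.ofReal_neg, ← Complex.ofReal_exp, Complex.norm_real,
      Real.norm_of_nonneg (Real.exp_pos _).le, Complex.sub_re, Complex.one_re]
    have : 0 < t := ht
    exact mul_le_of_le_one_left (by positivity) (norm_altCoeff_le n)
  have hFi : ∀ n, IntegrableOn (F n) (Ioi 0) := by
    intro n
    refine Integrable.mono' (integrableOn_gamma (hF0 n) hs0)
      (Measurable.aestronglyMeasurable (by simp only [hF]; fun_prop)) ?_
    filter_upwards [ae_restrict_mem measurableSet_Ioi] with t ht using hFn n t ht
  have hFs : Summable fun n => ∫ t in Ioi (0 : ℝ), ‖F n t‖ := by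
    refine Summable.of_nonneg_of_le (fun n => integral_nonneg fun _ => norm_nonneg _) (fun n => ?_)
      ((summable_rpow_neg hx hs).mul_right (Real.Gamma s.re))
    rw [← Real.integral_rpow_mul_exp_neg_mul_Ioi hs0 (hF0 n)]
    exact setIntegral_mono_on (hFi n).norm (integrableOn_gamma (hF0 n) hs0) measurableSet_Ioi (hFn n)
  have hB : ∀ n : ℕ, 0 < (Real.pi * (2 * ((n : ℝ) + 1) - 1)) ^ 2 / 4 := by
    intro n
    have : (0 : ℝ) < 2 * ((n : ℝ) + 1) - 1 := by linarith [n.cast_nonneg (α := ℝ)]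
    have := Real.pi_pos
    positivity
  have hGi : ∀ n, IntegrableOn (G n) (Ioi 0) := by
    intro n
    refine Integrable.mono' (integrableOn_kernel hx hs (hB n))
      (Measurable.aestronglyMeasurable (by simp only [hG]; fun_prop)) ?_
    filter_upwards [ae_restrict_mem measurableSet_Ioi] with t ht using (norm_kernel ht).le
  have hGs : Summable fun n => ∫ t in Ioi (0 : ℝ), ‖G n t‖ := by
    have h := summable_inv_add_sq (show 0 < Real.pi ^ 2 by positivity)
      (show (0 : ℝ) < 1 / 2 by norm_num)
    refine Summable.of_nonneg_of_le (fun n => integral_nonneg fun _ => norm_nonneg _) (fun n => ?_)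
      (h.mul_right (∫ u in Ioi (0 : ℝ), u ^ ((s.re + 1 / 2) - 1) * Real.exp (-(x ^ 2 * u))))
    rw [setIntegral_congr_fun measurableSet_Ioi (fun t ht => norm_kernel ht)]
    refine (integral_kernel_le hx hs (hB n)).trans (le_of_eq ?_)
    congr 2
    ring
  have h1 := hasSum_integral_of_summable_integral_norm hFi hFs
  have h2 := hasSum_integral_of_summable_integral_norm hGi hGs
  have h3 : ∫ t in Ioi (0 : ℝ), ∑' n, F n t = (√Real.pi : ℂ) * ∫ t in Ioi (0 : ℝ), ∑' n, G n t := by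
    rw [← integral_const_mul]
    refine setIntegral_congr_fun measurableSet_Ioi (fun t ht => ?_)
    have ht : 0 < t := ht
    have e1 : ∀ n, F n t = ((t : ℂ) ^ (s - 1) * (Real.exp (-(x ^ 2 * t)) : ℂ)) *
        (altCoeff n * (Real.exp (-((n : ℝ) ^ 2 * t)) : ℂ)) := by
      intro n
      simp only [hF]
      rw [← Complex.ofReal_mul, ← Complex.ofReal_neg, ← Complex.ofReal_exp,
        show -((x ^ 2 + (n : ℝ) ^ 2) * t) = -(x ^ 2 * t) + -((n : ℝ) ^ 2 * t) by ring, Real.exp_add]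
      push_cast
      ring
    have e2 : ∀ n, G n t = ((t : ℂ) ^ (s - 3 / 2) * (Real.exp (-(x ^ 2 * t)) : ℂ)) *
        (Real.exp (-((Real.pi * (2 * (n + 1) - 1)) ^ 2 / 4 / t)) : ℂ) := by
      intro n
      simp only [hG]
      rw [sub_eq_add_neg (-(x ^ 2 * t)), Real.exp_add]
      push_cast
      ring
    simp only [e1, e2]
    rw [tsum_mul_left, tsum_mul_left, theta_alternating ht,
      show s - 3 / 2 = (s - 1) + (-(1 / 2)) by ring,
      Complex.cpow_add _ _ (Complex.ofReal_ne_zero.2 ht.ne')]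
    ring
  have h4 : ∀ n : ℕ, ∫ t in Ioi (0 : ℝ), F n t =
      altCoeff n * (((x ^ 2 + (n : ℝ) ^ 2 : ℝ) : ℂ) ^ s)⁻¹ * Complex.Gamma s := by
    intro n
    simp only [hF]
    rw [integral_const_mul, Complex.integral_cpow_mul_exp_neg_mul_Ioi hs0 (hF0 n), one_div,
      Complex.inv_cpow _ _ (by
        rw [Complex.arg_ofReal_of_nonneg (hF0 n).le]; exact Real.pi_pos.ne)]
    ring
  have h5 := h1.tsum_eq
  rw [h1.summable.tsum_eq_zero_add, h3, ← h2.tsum_eq] at h5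
  simp only [h4, altCoeff_succ] at h5
  rw [tsum_mul_right] at h5
  have h6 : (((x ^ 2 + ((0 : ℕ) : ℝ) ^ 2 : ℝ) : ℂ) ^ s)⁻¹ = (x : ℂ) ^ (-(2 * s)) := by
    rw [← Complex.cpow_neg]
    have hx' : (x : ℂ) ≠ 0 := Complex.ofReal_ne_zero.2 hx.ne'
    have : ((x ^ 2 + ((0 : ℕ) : ℝ) ^ 2 : ℝ) : ℂ) = (x : ℂ) * (x : ℂ) := by push_cast; ring
    rw [this, Complex.mul_cpow_ofReal_nonneg hx.le hx.le, ← Complex.cpow_add _ _ hx']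
    congr 1
    ring
  rw [h6, show altCoeff 0 = 1 / 2 by simp [altCoeff]] at h5
  have h7 : ∀ n : ℕ, ∫ t in Ioi (0 : ℝ), G n t = kernelInt s x (Real.pi * (2 * (n + 1) - 1)) :=
    fun n => rfl
  simp only [h7] at h5
  rw [div_mul_eq_mul_div, ← h5]
  push_cast
  simp only [div_eq_mul_inv]
  field_simp

/-! ### The Bessel series -/

lemma cpow_mul_besselK {s : ℂ} {x m : ℝ} (hs : 1 / 2 < s.re) (hx : 0 < x) (hm : 0 < m) :
    (2 : ℂ) ^ ((3 : ℂ) / 2 - s) * (Real.pi : ℂ) ^ s * (x : ℂ) ^ ((1 : ℂ) / 2 - s) *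
      ((m : ℂ) ^ (s - 1 / 2) * besselK (s - 1 / 2) (Real.pi * m * x)) =
      (√Real.pi : ℂ) * kernelInt s x (Real.pi * m) := by
  have hpi := Real.pi_pos
  have hs0 : 0 < s.re := by linarith
  have hΓ : Complex.Gamma s ≠ 0 := Complex.Gamma_ne_zero_of_re_pos hs0
  have hB : 0 < Real.pi * m := by positivity
  rw [besselK, show s - 1 / 2 + 1 / 2 = s by ring, show s - 1 / 2 - 1 / 2 = s - 1 by ring,
    integral_Ioi_one_eq_kernelInt hs hx hB]
  -- The identity `key` between powers is checked on logarithms.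
  have e : ∀ {r : ℝ} (_ : 0 < r) (z : ℂ), (r : ℂ) ^ z = Complex.exp (Real.log r * z) := by
    intro r hr z
    rw [Complex.cpow_def_of_ne_zero (Complex.ofReal_ne_zero.2 hr.ne'), Complex.ofReal_log hr.le]
  have e' : ∀ {r : ℝ} (_ : 0 < r), (r : ℂ) = Complex.exp (Real.log r) := by
    intro r hr
    rw [← Complex.ofReal_exp, Real.exp_log hr]
  have l1 : Real.log (Real.pi * m * x / 2) =
      Real.log Real.pi + Real.log m + Real.log x - Real.log 2 := by
    rw [Real.log_div (by positivity) (by norm_num), Real.log_mul (by positivity) hx.ne',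
      Real.log_mul hpi.ne' hm.ne']
  have l2 : Real.log (4 / (Real.pi * m) ^ 2) =
      2 * Real.log 2 - 2 * (Real.log Real.pi + Real.log m) := by
    rw [Real.log_div (by norm_num) (by positivity), Real.log_pow, Real.log_mul hpi.ne' hm.ne',
      show (4 : ℝ) = 2 ^ 2 by norm_num, Real.log_pow]
    norm_num
  have l3 : Real.log (√Real.pi) = Real.log Real.pi / 2 := Real.log_sqrt hpi.le
  have l4 : ((Real.pi * m / (4 * √Real.pi) : ℝ) : ℂ) = Complex.exp
      (Real.log Real.pi / 2 + Real.log m - 2 * Real.log 2) := by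
    rw [e' (by positivity), Real.log_div (by positivity) (by positivity),
      Real.log_mul hpi.ne' hm.ne', Real.log_mul (by norm_num) (by positivity), l3,
      show (4 : ℝ) = 2 ^ 2 by norm_num, Real.log_pow]
    push_cast
    congr 1
    ring
  have key : (2 : ℂ) ^ ((3 : ℂ) / 2 - s) * (Real.pi : ℂ) ^ s * (x : ℂ) ^ ((1 : ℂ) / 2 - s) *
      (m : ℂ) ^ (s - 1 / 2) * ((Real.pi * m * x / 2 : ℝ) : ℂ) ^ (s - 1 / 2) *
      ((Real.pi * m / (4 * √Real.pi) : ℝ) : ℂ) * ((4 / (Real.pi * m) ^ 2 : ℝ) : ℂ) ^ s = 1 := by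
    rw [show (2 : ℂ) = ((2 : ℝ) : ℂ) by norm_num, e two_pos, e hpi, e hx, e hm,
      e (by positivity), l4, e (by positivity), l1, l2]
    simp only [← Complex.exp_add]
    refine (congrArg Complex.exp ?_).trans Complex.exp_zero
    push_cast
    ring
  have cancel : ∀ p q r k l c d J Γ r' : ℂ, Γ ≠ 0 → p * q * r * k * l * c * d = 1 →
      p * q * r * (k * (r' * l / Γ * (c * d * Γ * J))) = r' * J := by
    intro p q r k l c d J Γ r' hΓ h
    field_simp
    linear_combination r' * J * h
  exact cancel _ _ _ _ _ _ _ _ _ _ hΓ key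

theorem watson_formula_alternating (x : ℝ) (hx : 0 < x) (s : ℂ) (hs : 1 / 2 < s.re) :
    (∑' n : ℕ, (-1 : ℂ) ^ (n + 1) / ((x ^ 2 + (n + 1 : ℝ) ^ 2 : ℝ) : ℂ) ^ s) =
      -((x : ℂ) ^ (-(2 * s)) / 2)
      + (2 : ℂ) ^ ((3 : ℂ) / 2 - s) * (Real.pi : ℂ) ^ s * (x : ℂ) ^ ((1 : ℂ) / 2 - s) /
          Complex.Gamma s *
          ∑' n : ℕ, ((2 * (n + 1) - 1 : ℝ) : ℂ) ^ (s - 1 / 2) *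
            besselK (s - 1 / 2) (Real.pi * (2 * (n + 1) - 1) * x) := by
  have h : ∀ n : ℕ, (2 : ℂ) ^ ((3 : ℂ) / 2 - s) * (Real.pi : ℂ) ^ s *
      (x : ℂ) ^ ((1 : ℂ) / 2 - s) * (((2 * (n + 1) - 1 : ℝ) : ℂ) ^ (s - 1 / 2) *
        besselK (s - 1 / 2) (Real.pi * (2 * (n + 1) - 1) * x)) =
      (√Real.pi : ℂ) * kernelInt s x (Real.pi * (2 * (n + 1) - 1)) := fun n =>
    cpow_mul_besselK hs hx (by linarith [n.cast_nonneg (α := ℝ)])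
  rw [div_mul_eq_mul_div, ← tsum_mul_left]
  simp only [h]
  rw [tsum_mul_left]
  linear_combination sum_kernelInt hs hx
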